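/- Let 0 < d < 4/5 with d ≠ 1/3 and d ≠ 2/3. Then ∫₀¹∫₀¹ u^{2-2d}(1-u)^{1-2d} v^{1-d} (1-uv)^{-d} ₂F₁(1,d;2-d;v) dv du = [Γ(2-2d)Γ(2-3d)Γ(2-d)Γ(3d-2)/(Γ(5-5d)Γ(d)²)]·₃F₂(2-2d,2d-1,3d-2; d,3d-1; 1) + Γ(4-5d)Γ(3-3d)Γ(2-d)Γ(3d-2)²/(Γ(5-5d)Γ(d)²). -/

import Mathlib

open Real MeasureTheory

/-- Pochhammer symbol `(a)_k = a (a+1) ⋯ (a+k-1)` for real `a`. -/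
noncomputable def poch (a : ℝ) (k : ℕ) : ℝ := (ascPochhammer ℝ k).eval a

/-- Gaussian hypergeometric function `₂F₁(a,b;c;z)`. -/
noncomputable def hyp2F1 (a b c z : ℝ) : ℝ :=
  ∑' k : ℕ, (poch a k * poch b k) / poch c k * z ^ k / (Nat.factorial k)

/-- Generalized hypergeometric function `₃F₂(a₁,a₂,a₃;b₁,b₂;z)`. -/
noncomputable def hyp3F2 (a₁ a₂ a₃ b₁ b₂ z : ℝ) : ℝ :=
  ∑' k : ℕ, (poch a₁ k * poch a₂ k * poch a₃ k) / (poch b₁ k * poch b₂ k) * z ^ k /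
    (Nat.factorial k)

/-- Generalized hypergeometric function `₄F₃(a₁,a₂,a₃,a₄;b₁,b₂,b₃;z)`. -/
noncomputable def hyp4F3 (a₁ a₂ a₃ a₄ b₁ b₂ b₃ z : ℝ) : ℝ :=
  ∑' k : ℕ, (poch a₁ k * poch a₂ k * poch a₃ k * poch a₄ k) /
    (poch b₁ k * poch b₂ k * poch b₃ k) * z ^ k / (Nat.factorial k)

open Filter Topology Asymptotics

lemma poch_zero (a : ℝ) : poch a 0 = 1 := by simp [poch]

lemma poch_succ (a : ℝ) (k : ℕ) : poch a (k + 1) = poch a k * (a + k) := by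
  simp [poch, ascPochhammer_succ_eval]

lemma poch_eq_prod (a : ℝ) (k : ℕ) : poch a k = ∏ j ∈ Finset.range k, (a + j) := by
  induction k with
  | zero => simp [poch_zero]
  | succ k ih => rw [poch_succ, ih, Finset.prod_range_succ]

lemma poch_succ_left (a : ℝ) (k : ℕ) : poch a (k + 1) = a * poch (a + 1) k := by
  rw [poch_eq_prod, poch_eq_prod, Finset.prod_range_succ', mul_comm]
  congr 1
  · simp
  · apply Finset.prod_congr rfl
    intro j _
    push_cast
    ring

lemma poch_one (k : ℕ) : poch 1 k = (k.factorial : ℝ) := by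
  simp [poch, ascPochhammer_eval_one]

lemma poch_pos {a : ℝ} (ha : 0 < a) (k : ℕ) : 0 < poch a k := ascPochhammer_pos k a ha

/-- not a pole of Gamma -/
def NP (c : ℝ) : Prop := ∀ m : ℕ, c + m ≠ 0

lemma NP_of_pos {c : ℝ} (h : 0 < c) : NP c := fun m => by positivity

lemma NP.succ {c : ℝ} (h : NP c) : NP (c + 1) := fun m => by
  have := h (m + 1); push_cast at this; intro h'; apply this; linarith

lemma NP.add {c : ℝ} (h : NP c) (n : ℕ) : NP (c + n) := fun m => by
  have := h (n + m); push_cast at this; intro h'; apply this; linarith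

lemma NP.ne {c : ℝ} (h : NP c) : c ≠ 0 := by simpa using h 0

lemma poch_ne {c : ℝ} (h : NP c) (k : ℕ) : poch c k ≠ 0 := by
  rw [poch_eq_prod, Finset.prod_ne_zero_iff]
  exact fun j _ => h j

lemma NP.Gamma_ne {c : ℝ} (h : NP c) : Real.Gamma c ≠ 0 :=
  Real.Gamma_ne_zero fun m hm => h m (by rw [hm]; ring)

lemma Gamma_add_nat {c : ℝ} (h : NP c) (k : ℕ) :
    Real.Gamma (c + k) = poch c k * Real.Gamma c := by
  induction k with
  | zero => simp [poch_zero]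
  | succ k ih =>
    rw [poch_succ, Nat.cast_succ, ← add_assoc, Real.Gamma_add_one (h k), ih]; ring

lemma poch_mul_shift (a : ℝ) (m k : ℕ) : poch a (m + k) = poch a m * poch (a + m) k := by
  induction k with
  | zero => simp [poch_zero]
  | succ k ih => rw [← add_assoc, poch_succ, ih, poch_succ]; push_cast; ring

lemma ratio_tendsto (r : ℝ) :
    Tendsto (fun n : ℕ => ((n : ℝ) / (n + 1)) ^ r) atTop (𝓝 1) := by
  have h := tendsto_natCast_div_add_atTop (1 : ℝ)
  have := h.rpow_const (p := r) (Or.inl one_ne_zero)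
  simpa using this

lemma poch_limit (a : ℝ) :
    Tendsto (fun k : ℕ => poch a k / (k.factorial * ((k : ℝ) + 1) ^ (a - 1))) atTop
      (𝓝 (Real.Gamma a)⁻¹) := by
  by_cases hN : NP a
  · rw [← tendsto_add_atTop_iff_nat 1]
    have h1 := (Real.GammaSeq_tendsto_Gamma a).inv₀ hN.Gamma_ne
    have h2 := ratio_tendsto a
    have h3 := (tendsto_add_atTop_iff_nat 1).2 (ratio_tendsto (a - 1))
    have h4 := (h1.mul h2).mul h3
    simp only [mul_one] at h4
    refine h4.congr' ?_
    filter_upwards [eventually_gt_atTop 0] with n hn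
    have hn' : (0 : ℝ) < n := by exact_mod_cast hn
    rw [Real.GammaSeq, ← poch_eq_prod, Real.div_rpow hn'.le (by positivity),
      Real.div_rpow (by positivity) (by positivity), Nat.factorial_succ]
    push_cast
    have e1 : ((n : ℝ) + 1) ^ a = ((n : ℝ) + 1) ^ (a - 1) * (n + 1) := by
      rw [← Real.rpow_add_one (by positivity)]; congr 1; ring
    rw [e1]
    have := poch_ne hN (n + 1)
    have q1 : (n : ℝ) ^ a ≠ 0 := by positivity
    have q2 : ((n : ℝ) + 1) ^ (a - 1) ≠ 0 := by positivity
    have q3 : ((n : ℝ) + 1 + 1) ^ (a - 1) ≠ 0 := by positivity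
    have q4 : (n.factorial : ℝ) ≠ 0 := by positivity
    field_simp
  · unfold NP at hN
    push Not at hN
    obtain ⟨m, hm⟩ := hN
    have : Real.Gamma a = 0 := (Real.Gamma_eq_zero_iff a).2 ⟨m, by linarith⟩
    rw [this, inv_zero]
    refine tendsto_const_nhds.congr' ?_
    filter_upwards [eventually_gt_atTop m] with n hn
    have : poch a n = 0 := by
      rw [poch_eq_prod]
      exact Finset.prod_eq_zero (Finset.mem_range.2 hn) hm
    simp [this]

lemma poch_bigO (a : ℝ) :
    (fun k : ℕ => poch a k / k.factorial) =O[atTop] fun k : ℕ => ((k : ℝ) + 1) ^ (a - 1) := by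
  refine isBigO_of_div_tendsto_nhds ?_ _ ((poch_limit a).congr ?_)
  · refine Eventually.of_forall fun k hk => ?_
    have : ((k : ℝ) + 1) ^ (a - 1) ≠ 0 := by positivity
    exact absurd hk this
  · intro k
    simp only [Pi.div_apply]
    rw [div_div]

lemma poch_inv_bigO {c : ℝ} (hc : NP c) :
    (fun k : ℕ => k.factorial / poch c k) =O[atTop] fun k : ℕ => ((k : ℝ) + 1) ^ (1 - c) := by
  refine isBigO_of_div_tendsto_nhds ?_ _ (((poch_limit c).inv₀ (inv_ne_zero hc.Gamma_ne)).congr ?_)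
  · refine Eventually.of_forall fun k hk => ?_
    have : ((k : ℝ) + 1) ^ (1 - c) ≠ 0 := by positivity
    exact absurd hk this
  · intro k
    simp only [Pi.div_apply]
    rw [inv_div, ← neg_sub c 1, Real.rpow_neg (by positivity), div_inv_eq_mul]
    ring

lemma inv_bigO (e : ℝ) :
    (fun k : ℕ => (e + k)⁻¹) =O[atTop] fun k : ℕ => ((k : ℝ) + 1) ^ (-1 : ℝ) := by
  refine isBigO_of_div_tendsto_nhds ?_ 1 ?_
  · refine Eventually.of_forall fun k hk => ?_
    have : ((k : ℝ) + 1) ^ (-1 : ℝ) ≠ 0 := by positivity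
    exact absurd hk this
  · have h1 := tendsto_natCast_div_add_atTop (𝕜 := ℝ) e
    have h2 := (tendsto_natCast_div_add_atTop (𝕜 := ℝ) 1).inv₀ one_ne_zero
    have := h1.mul h2
    simp only [inv_one, mul_one] at this
    refine this.congr' ?_
    filter_upwards [eventually_gt_atTop 0] with n hn
    have hn' : (0 : ℝ) < n := by exact_mod_cast hn
    simp only [Pi.div_apply]
    rw [Real.rpow_neg_one, inv_div, div_inv_eq_mul, add_comm e]
    field_simp

lemma rpow_add_simp (x y : ℝ) (k : ℕ) :
    ((k : ℝ) + 1) ^ x * ((k : ℝ) + 1) ^ y = ((k : ℝ) + 1) ^ (x + y) :=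
  (Real.rpow_add (by positivity) _ _).symm

lemma summable_of_bigO {f : ℕ → ℝ} {r : ℝ} (hr : r < -1)
    (h : f =O[atTop] fun k : ℕ => ((k : ℝ) + 1) ^ r) : Summable f := by
  refine summable_of_isBigO_nat ?_ h
  have := (summable_nat_add_iff 1).2 (Real.summable_nat_rpow.2 hr)
  simpa using this

lemma tendsto_zero_of_bigO {f : ℕ → ℝ} {r : ℝ} (hr : r < 0)
    (h : f =O[atTop] fun k : ℕ => ((k : ℝ) + 1) ^ r) : Tendsto f atTop (𝓝 0) := by
  refine h.trans_tendsto ?_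
  have h1 : Tendsto (fun k : ℕ => (k : ℝ) + 1) atTop atTop :=
    tendsto_atTop_add_const_right _ _ tendsto_natCast_atTop_atTop
  have := (tendsto_rpow_neg_atTop (y := -r) (by linarith)).comp h1
  simpa [Function.comp_def] using this

/-- Gauss term -/
noncomputable def gt (a b c : ℝ) (k : ℕ) : ℝ := poch a k * poch b k / (poch c k * k.factorial)

lemma gt_bigO (a b : ℝ) {c : ℝ} (hc : NP c) :
    gt a b c =O[atTop] fun k : ℕ => ((k : ℝ) + 1) ^ (a + b - c - 1) := by
  have := ((poch_bigO a).mul (poch_bigO b)).mul (poch_inv_bigO hc)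
  simp only [rpow_add_simp] at this
  refine (this.congr_left ?_).congr_right ?_
  · intro k
    have : (k.factorial : ℝ) ≠ 0 := by positivity
    have := poch_ne hc k
    rw [gt]; field_simp
  · intro k; congr 1; ring

lemma gt_e_bigO (a b e : ℝ) {c : ℝ} (hc : NP c) :
    (fun k : ℕ => gt a b c k * (e + k)⁻¹) =O[atTop]
      fun k : ℕ => ((k : ℝ) + 1) ^ (a + b - c - 2) := by
  have := (gt_bigO a b hc).mul (inv_bigO e)
  simp only [rpow_add_simp] at this
  refine this.congr_right ?_
  intro k; congr 1; ring

lemma gt_summable {a b c : ℝ} (hc : NP c) (h : a + b < c) : Summable (gt a b c) :=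
  summable_of_bigO (by linarith) (gt_bigO a b hc)

lemma gt_e_summable {a b c : ℝ} (hc : NP c) (e : ℝ) (h : a + b < c + 1) :
    Summable (fun k : ℕ => gt a b c k * (e + k)⁻¹) :=
  summable_of_bigO (by linarith) (gt_e_bigO a b e hc)

lemma natmul_tendsto {f : ℕ → ℝ} {r : ℝ} (hr : r < -1)
    (h : f =O[atTop] fun k : ℕ => ((k : ℝ) + 1) ^ r) :
    Tendsto (fun k : ℕ => (k : ℝ) * f k) atTop (𝓝 0) := by
  have h1 : (fun k : ℕ => (k : ℝ)) =O[atTop] fun k : ℕ => ((k : ℝ) + 1) ^ (1 : ℝ) := by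
    refine IsBigO.of_bound 1 (Eventually.of_forall fun k => ?_)
    rw [Real.rpow_one, Real.norm_of_nonneg (by positivity), Real.norm_of_nonneg (by positivity)]
    linarith
  have := h1.mul h
  simp only [rpow_add_simp] at this
  exact tendsto_zero_of_bigO (by linarith) this

/-- Telescoping sums. -/
lemma hasSum_telescope {f G : ℕ → ℝ} (hf : Summable f) (h : ∀ k, f k = G (k + 1) - G k)
    (h0 : G 0 = 0) {l : ℝ} (hG : Tendsto G atTop (𝓝 l)) : HasSum f l := by
  refine (hf.hasSum_iff_tendsto_nat).2 ?_
  refine hG.congr fun n => ?_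
  simp only [h]
  rw [Finset.sum_range_sub, h0, sub_zero]

lemma gauss_step {a b c : ℝ} (hc : NP c) (h : a + b < c) :
    c * (c - a - b) * ∑' k, gt a b c k = (c - a) * (c - b) * ∑' k, gt a b (c + 1) k := by
  have s1 := gt_summable hc h
  have s2 : Summable (gt a b (c + 1)) := gt_summable hc.succ (by linarith)
  have hs := (s1.mul_left (c * (c - a - b))).sub (s2.mul_left ((c - a) * (c - b)))
  have ht := hasSum_telescope (G := fun k => (-c) * ((k : ℝ) * gt a b c k)) hs ?_ (by simp)
    ((natmul_tendsto (by linarith) (gt_bigO a b hc)).const_mul (-c))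
  · rw [mul_zero] at ht
    have := ht.tsum_eq
    rw [Summable.tsum_sub (s1.mul_left _) (s2.mul_left _), tsum_mul_left, tsum_mul_left] at this
    linarith
  · intro k
    have e1 : poch (c + 1) k = poch c k * (c + k) / c := by
      rw [eq_div_iff hc.ne, ← poch_succ, poch_succ_left]; ring
    have := poch_ne hc k
    have := hc.ne
    have := hc k
    have : (k.factorial : ℝ) ≠ 0 := by positivity
    have : (k : ℝ) + 1 ≠ 0 := by positivity
    simp only [gt, poch_succ, e1, Nat.factorial_succ]
    push_cast
    field_simp
    ring

lemma gauss_iter {a b c : ℝ} (hc : NP c) (h : a + b < c) (n : ℕ) :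
    poch c n * poch (c - a - b) n * ∑' k, gt a b c k =
      poch (c - a) n * poch (c - b) n * ∑' k, gt a b (c + n) k := by
  induction n with
  | zero => simp [poch_zero]
  | succ n ih =>
    have := gauss_step (hc.add n) (a := a) (b := b) (by have : (0:ℝ) ≤ n := by positivity
                                                        linarith)
    simp only [poch_succ]
    push_cast
    rw [← add_assoc]
    linear_combination (c + n) * (c + n - a - b) * ih + poch (c - a) n * poch (c - b) n * this

lemma poch_mono {c x : ℝ} (hc : 0 < c) (h : c ≤ x) (k : ℕ) : poch c k ≤ poch x k := by
  rw [poch_eq_prod, poch_eq_prod]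
  exact Finset.prod_le_prod (fun i _ => by positivity) (fun i _ => by linarith)

lemma gauss_lim {a b c : ℝ} (hc : 0 < c) (h : a + b < c) :
    Tendsto (fun n : ℕ => ∑' k, gt a b (c + n) k) atTop (𝓝 1) := by
  have h1 : (1 : ℝ) = ∑' k : ℕ, if k = 0 then (1 : ℝ) else 0 := by simp
  rw [h1]
  refine tendsto_tsum_of_dominated_convergence (gt_summable (NP_of_pos hc) h).norm ?_ ?_
  · intro k
    rcases k with _ | k
    · simp [gt, poch_zero]
    · simp only [Nat.add_eq_zero_iff, one_ne_zero, and_false, if_false]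
      simp only [gt]
      have hden : Tendsto (fun n : ℕ => poch (c + n) (k + 1) * ((k + 1).factorial : ℝ))
          atTop atTop := by
        refine Tendsto.atTop_mul_const (by positivity) ?_
        have hb : ∀ n : ℕ, ((n : ℝ) + c) * poch (c + 1) k ≤ poch (c + n) (k + 1) := by
          intro n
          rw [poch_succ_left, add_comm (n : ℝ)]
          have : (0:ℝ) ≤ n := by positivity
          exact mul_le_mul_of_nonneg_left (poch_mono (by linarith) (by linarith) k) (by linarith)
        refine tendsto_atTop_mono hb ?_
        exact Tendsto.atTop_mul_const (poch_pos (by linarith) k)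
          (tendsto_atTop_add_const_right _ _ tendsto_natCast_atTop_atTop)
      exact hden.const_div_atTop _
  · refine Eventually.of_forall fun n k => ?_
    have hn : (0:ℝ) ≤ n := by positivity
    have hp := poch_pos hc k
    have hp' := poch_mono hc (by linarith : c ≤ c + n) k
    simp only [gt, norm_div, norm_mul]
    have : ‖poch c k‖ ≤ ‖poch (c + n) k‖ := by
      rw [Real.norm_of_nonneg hp.le, Real.norm_of_nonneg (hp.le.trans hp')]; exact hp'
    have h2 : 0 < ‖poch c k‖ := by rw [Real.norm_of_nonneg hp.le]; exact hp
    have h3 : 0 < ‖(k.factorial : ℝ)‖ := by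
      rw [Real.norm_of_nonneg (by positivity)]; positivity
    gcongr

lemma gauss_pos {a b c : ℝ} (hc : 0 < c) (h : a + b < c) (ha : a < c) (hb : b < c) :
    ∑' k, gt a b c k =
      Real.Gamma c * Real.Gamma (c - a - b) / (Real.Gamma (c - a) * Real.Gamma (c - b)) := by
  have hl := gauss_lim hc h
  have l1 := poch_limit c
  have l2 := poch_limit (c - a - b)
  have l3 := poch_limit (c - a)
  have l4 := poch_limit (c - b)
  have g1 := (Real.Gamma_pos_of_pos hc).ne'
  have g2 := (Real.Gamma_pos_of_pos (by linarith : 0 < c - a - b)).ne'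
  have g3 := (Real.Gamma_pos_of_pos (by linarith : 0 < c - a)).ne'
  have g4 := (Real.Gamma_pos_of_pos (by linarith : 0 < c - b)).ne'
  have L := ((l3.mul l4).div (l1.mul l2) (mul_ne_zero (inv_ne_zero g1) (inv_ne_zero g2))).mul hl
  have R : Tendsto (fun _ : ℕ => ∑' k, gt a b c k) atTop (𝓝 (∑' k, gt a b c k)) :=
    tendsto_const_nhds
  rw [tendsto_nhds_unique R (L.congr ?_)]
  · field_simp
  · intro n
    have p1 := (poch_pos hc n).ne'
    have p2 := (poch_pos (by linarith : 0 < c - a - b) n).ne'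
    rw [Pi.div_apply]
    have hE : ((n : ℝ) + 1) ^ (c - a - 1) * ((n : ℝ) + 1) ^ (c - b - 1)
        = ((n : ℝ) + 1) ^ (c - 1) * ((n : ℝ) + 1) ^ (c - a - b - 1) := by
      rw [rpow_add_simp, rpow_add_simp]; congr 1; ring
    have q1 : ((n : ℝ) + 1) ^ (c - a - 1) ≠ 0 := by positivity
    have q2 : ((n : ℝ) + 1) ^ (c - b - 1) ≠ 0 := by positivity
    have q3 : ((n : ℝ) + 1) ^ (c - 1) ≠ 0 := by positivity
    have q4 : ((n : ℝ) + 1) ^ (c - a - b - 1) ≠ 0 := by positivity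
    have : (n.factorial : ℝ) ≠ 0 := by positivity
    have key : poch (c - a) n * poch (c - b) n * (∑' k, gt a b (c + n) k)
       = poch c n * poch (c - a - b) n * ∑' k, gt a b c k := (gauss_iter (NP_of_pos hc) h n).symm
    have e2 : poch (c - a) n / (n.factorial * ((n : ℝ) + 1) ^ (c - a - 1)) *
        (poch (c - b) n / (n.factorial * ((n : ℝ) + 1) ^ (c - b - 1))) =
        poch (c - a) n * poch (c - b) n / (n.factorial ^ 2 * (((n : ℝ) + 1) ^ (c - 1) *
          ((n : ℝ) + 1) ^ (c - a - b - 1))) := by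
      rw [← hE]; field_simp
    rw [e2]
    have e3 : ∑' k, gt a b c k = poch (c - a) n * poch (c - b) n * (∑' k, gt a b (c + n) k)
      / (poch c n * poch (c - a - b) n) := by rw [key]; field_simp
    rw [e3]
    field_simp

lemma inv_Gamma_step (s : ℝ) : s * (Real.Gamma (s + 1))⁻¹ = (Real.Gamma s)⁻¹ := by
  by_cases hs : s = 0
  · simp [hs, Real.Gamma_zero]
  · rw [Real.Gamma_add_one hs, mul_inv, ← mul_assoc, mul_inv_cancel₀ hs, one_mul]

lemma gauss_aux (a b : ℝ) (N : ℕ) : ∀ c : ℝ, NP c → a + b < c → 0 < c + N → a < c + N →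
    b < c + N → ∑' k, gt a b c k =
      Real.Gamma c * Real.Gamma (c - a - b) / (Real.Gamma (c - a) * Real.Gamma (c - b)) := by
  induction N with
  | zero =>
    intro c _ h h1 h2 h3
    simp only [Nat.cast_zero, add_zero] at h1 h2 h3
    exact gauss_pos h1 h h2 h3
  | succ N ih =>
    intro c hc h h1 h2 h3
    push_cast at h1 h2 h3
    have := ih (c + 1) hc.succ (by linarith) (by linarith) (by linarith) (by linarith)
    have st := gauss_step hc h
    rw [this] at st
    have n1 := hc.ne
    have n2 : c - a - b ≠ 0 := by linarith
    have e1 := inv_Gamma_step (c - a)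
    have e2 := inv_Gamma_step (c - b)
    rw [← sub_eq_zero]
    have : c * (c - a - b) ≠ 0 := mul_ne_zero n1 n2
    apply mul_left_cancel₀ this
    rw [mul_zero, mul_sub, st, div_eq_mul_inv, div_eq_mul_inv, mul_inv, mul_inv,
      ← e1, ← e2, Real.Gamma_add_one hc.ne, show c + 1 - a - b = (c - a - b) + 1 by ring,
      Real.Gamma_add_one n2, show c + 1 - a = c - a + 1 by ring,
      show c + 1 - b = c - b + 1 by ring]
    ring

theorem gauss {a b c : ℝ} (hc : NP c) (h : a + b < c) : HasSum (gt a b c)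
    (Real.Gamma c * Real.Gamma (c - a - b) / (Real.Gamma (c - a) * Real.Gamma (c - b))) := by
  obtain ⟨N, hN⟩ := exists_nat_gt (max (max (-c) (a - c)) (b - c))
  simp only [max_lt_iff] at hN
  rw [← gauss_aux a b N c hc h (by linarith) (by linarith) (by linarith)]
  exact (gt_summable hc h).hasSum

lemma hasSum_conv {ι : Type*} {f g : ι → ℝ} {s t : ℝ} (h : HasSum f s) (hfg : ∀ k, g k = f k)
    (hst : t = s) : HasSum g t := by
  rw [hst, show g = f from funext hfg]; exact h

/-- `∑ (x)_k / k! / (y + k)`. -/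
theorem betaSum {x y : ℝ} (hx : x < 1) (hy : NP y) :
    HasSum (fun k : ℕ => poch x k / k.factorial * (y + k)⁻¹)
      (Real.Gamma y * Real.Gamma (1 - x) / Real.Gamma (y + 1 - x)) := by
  have := (gauss (a := x) (b := y) hy.succ (by linarith)).div_const y
  refine hasSum_conv this (fun k => ?_) ?_
  · have e1 : poch (y + 1) k = poch y k * (y + k) / y := by
      rw [eq_div_iff hy.ne, ← poch_succ, poch_succ_left]; ring
    have := poch_ne hy k
    have := hy.ne
    have := hy k
    have : (k.factorial : ℝ) ≠ 0 := by positivity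
    rw [gt, e1]
    field_simp
  · rw [Real.Gamma_add_one hy.ne, show y + 1 - x - y = 1 - x by ring,
      show y + 1 - y = 1 by ring, Real.Gamma_one]
    have := hy.ne
    field_simp

lemma swap_nonneg {f : ℕ → ℕ → ℝ} (h0 : ∀ i j, 0 ≤ f i j) {r c : ℕ → ℝ}
    (hr : ∀ i, HasSum (f i) (r i)) (hc : ∀ j, HasSum (fun i => f i j) (c j)) {S : ℝ}
    (hS : HasSum r S) : HasSum c S := by
  have hsum : Summable (fun p : ℕ × ℕ => f p.1 p.2) := by
    refine (summable_prod_of_nonneg (fun p => h0 p.1 p.2)).2 ⟨fun i => (hr i).summable, ?_⟩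
    refine hS.summable.congr fun i => ?_
    exact (hr i).tsum_eq.symm
  obtain ⟨T, hT⟩ := hsum
  have h1 : HasSum r T := hT.prod_fiberwise hr
  have h2 : HasSum (fun p : ℕ × ℕ => f p.2 p.1) T := by
    have := (Equiv.prodComm ℕ ℕ).hasSum_iff.2 hT
    exact this
  have h3 : HasSum c T := h2.prod_fiberwise hc
  rwa [hS.unique h1]

set_option maxHeartbeats 2000000 in
lemma threeTerm_base {a b c e : ℝ} (ha : 0 < a) (hb : b < 1) (hac : a < c) (he : NP e)
    (hae : NP (a - e)) :
    Real.Gamma (c - a) * Real.Gamma e * Real.Gamma (1 - b) * Real.Gamma (a - e) *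
      (Real.Gamma (c - e))⁻¹ * (Real.Gamma (e + 1 - b))⁻¹ =
    Real.Gamma (c - a) * Real.Gamma a / Real.Gamma c * ∑' k : ℕ, gt a b c k * (e + k)⁻¹ +
    Real.Gamma a * Real.Gamma (1 - b) / Real.Gamma (a + 1 - b) *
      ∑' j : ℕ, gt (a + 1 - c) a (a + 1 - b) j * (a - e + j)⁻¹ := by
  have hx : a + 1 - c < 1 := by linarith
  have hB := betaSum hb he
  have hC := betaSum hx hae
  have hB' := betaSum hb (NP_of_pos ha)
  have hC' := betaSum hx (NP_of_pos ha)
  set B : ℕ → ℝ := fun k => poch b k / k.factorial with hBdef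
  set C : ℕ → ℝ := fun k => poch (a + 1 - c) k / k.factorial with hCdef
  have hf := hB.mul hC (summable_mul_of_summable_norm hB.summable.norm hC.summable.norm)
  have hpos : ∀ k j : ℕ, 0 < a + j + k := fun k j => by positivity
  have s1 : Summable (fun p : ℕ × ℕ => B p.1 * C p.2 * (e + p.1)⁻¹ * (a + p.2 + p.1)⁻¹) := by
    refine Summable.of_norm_bounded
      (summable_mul_of_summable_norm hB.summable.norm hC'.summable.norm).norm ?_
    rintro ⟨k, j⟩
    have h1 : ‖(a + (j : ℝ) + k)⁻¹‖ ≤ ‖(a + (j : ℝ))⁻¹‖ := by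
      rw [Real.norm_of_nonneg (by positivity), Real.norm_of_nonneg (by positivity)]
      exact inv_anti₀ (by positivity) (by simp)
    calc ‖B k * C j * (e + k)⁻¹ * (a + j + k)⁻¹‖
        = ‖B k‖ * ‖C j‖ * ‖(e + (k : ℝ))⁻¹‖ * ‖(a + (j : ℝ) + k)⁻¹‖ := by simp only [norm_mul]
      _ ≤ ‖B k‖ * ‖C j‖ * ‖(e + (k : ℝ))⁻¹‖ * ‖(a + (j : ℝ))⁻¹‖ := by gcongr
      _ = ‖B k * (e + k)⁻¹ * (C j * (a + j)⁻¹)‖ := by simp only [norm_mul]; ring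
  have s2 : Summable (fun p : ℕ × ℕ => B p.1 * C p.2 * (a - e + p.2)⁻¹ * (a + p.2 + p.1)⁻¹) := by
    refine Summable.of_norm_bounded
      (summable_mul_of_summable_norm hB'.summable.norm hC.summable.norm).norm ?_
    rintro ⟨k, j⟩
    have h1 : ‖(a + (j : ℝ) + k)⁻¹‖ ≤ ‖(a + (k : ℝ))⁻¹‖ := by
      rw [Real.norm_of_nonneg (by positivity), Real.norm_of_nonneg (by positivity)]
      exact inv_anti₀ (by positivity) (by linarith [(Nat.cast_nonneg j : (0:ℝ) ≤ j)])
    calc ‖B k * C j * (a - e + j)⁻¹ * (a + j + k)⁻¹‖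
        = ‖B k‖ * ‖C j‖ * ‖(a - e + (j : ℝ))⁻¹‖ * ‖(a + (j : ℝ) + k)⁻¹‖ := by simp only [norm_mul]
      _ ≤ ‖B k‖ * ‖C j‖ * ‖(a - e + (j : ℝ))⁻¹‖ * ‖(a + (k : ℝ))⁻¹‖ := by gcongr
      _ = ‖B k * (a + k)⁻¹ * (C j * (a - e + j)⁻¹)‖ := by simp only [norm_mul]; ring
  obtain ⟨T1, hT1⟩ := s1
  obtain ⟨T2, hT2⟩ := s2
  have hsum := hf.unique (hasSum_conv (hT1.add hT2) (fun p => ?_) rfl)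
  swap
  · have := he p.1
    have := hae p.2
    have := (hpos p.1 p.2).ne'
    change B p.1 * (e + p.1)⁻¹ * (C p.2 * (a - e + p.2)⁻¹) =
      B p.1 * C p.2 * (e + p.1)⁻¹ * (a + p.2 + p.1)⁻¹ +
      B p.1 * C p.2 * (a - e + p.2)⁻¹ * (a + p.2 + p.1)⁻¹
    clear_value B C
    field_simp
    ring
  have r1 : HasSum (fun k : ℕ => Real.Gamma (c - a) * Real.Gamma a / Real.Gamma c *
      (gt a b c k * (e + k)⁻¹)) T1 := by
    refine hT1.prod_fiberwise (fun k => ?_)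
    have hk := (betaSum hx ((NP_of_pos ha).add k)).mul_left (B k * (e + k)⁻¹)
    have hc : NP c := NP_of_pos (by linarith)
    refine hasSum_conv hk (fun j => ?_) ?_
    · rw [show a + (k : ℝ) + j = a + j + k by ring,
        show C j = poch (a + 1 - c) j / j.factorial from rfl]; ring
    · rw [show a + (k : ℝ) + 1 - (a + 1 - c) = c + k by ring, show 1 - (a + 1 - c) = c - a by ring,
        Gamma_add_nat hc, Gamma_add_nat (NP_of_pos ha), gt, show B k = poch b k / k.factorial from rfl]
      clear_value B C
      have := hc.Gamma_ne
      have := poch_ne hc k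
      have : (k.factorial : ℝ) ≠ 0 := by positivity
      field_simp
  have r2 : HasSum (fun j : ℕ => Real.Gamma a * Real.Gamma (1 - b) / Real.Gamma (a + 1 - b) *
      (gt (a + 1 - c) a (a + 1 - b) j * (a - e + j)⁻¹)) T2 := by
    have hT2' : HasSum (fun p : ℕ × ℕ => B p.2 * C p.1 * (a - e + p.1)⁻¹ * (a + p.1 + p.2)⁻¹) T2 :=
      (Equiv.prodComm ℕ ℕ).hasSum_iff.2 hT2
    refine hT2'.prod_fiberwise (fun j => ?_)
    have hk := (betaSum hb ((NP_of_pos ha).add j)).mul_left (C j * (a - e + j)⁻¹)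
    have hc : NP (a + 1 - b) := NP_of_pos (by linarith)
    refine hasSum_conv hk (fun k => ?_) ?_
    · rw [show B k = poch b k / k.factorial from rfl]
      ring
    · rw [show a + (j : ℝ) + 1 - b = a + 1 - b + j by ring,
        Gamma_add_nat hc, Gamma_add_nat (NP_of_pos ha), gt,
        show C j = poch (a + 1 - c) j / j.factorial from rfl]
      clear_value B C
      have := hc.Gamma_ne
      have := poch_ne hc j
      have : (j.factorial : ℝ) ≠ 0 := by positivity
      field_simp
  rw [← tsum_mul_left, ← tsum_mul_left, r1.tsum_eq, r2.tsum_eq, ← hsum,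
    show 1 - (a + 1 - c) = c - a by ring, show a - e + 1 - (a + 1 - c) = c - e by ring]
  ring

lemma threeTerm_step {a b c e : ℝ} (ha : 0 < a) (hb : b < 1) (hc : 0 < c) (habc : a + b < c + 1)
    (hca : NP (c - a)) (he : NP e) (hae : NP (a - e))
    (h : Real.Gamma (c + 1 - a) * Real.Gamma e * Real.Gamma (1 - b) * Real.Gamma (a - e) *
      (Real.Gamma (c + 1 - e))⁻¹ * (Real.Gamma (e + 1 - b))⁻¹ =
    Real.Gamma (c + 1 - a) * Real.Gamma a / Real.Gamma (c + 1) *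
      ∑' k : ℕ, gt a b (c + 1) k * (e + k)⁻¹ +
    Real.Gamma a * Real.Gamma (1 - b) / Real.Gamma (a + 1 - b) *
      ∑' j : ℕ, gt (a + 1 - (c + 1)) a (a + 1 - b) j * (a - e + j)⁻¹) :
    Real.Gamma (c - a) * Real.Gamma e * Real.Gamma (1 - b) * Real.Gamma (a - e) *
      (Real.Gamma (c - e))⁻¹ * (Real.Gamma (e + 1 - b))⁻¹ =
    Real.Gamma (c - a) * Real.Gamma a / Real.Gamma c * ∑' k : ℕ, gt a b c k * (e + k)⁻¹ +
    Real.Gamma a * Real.Gamma (1 - b) / Real.Gamma (a + 1 - b) *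
      ∑' j : ℕ, gt (a + 1 - c) a (a + 1 - b) j * (a - e + j)⁻¹ := by
  have hc1 : NP (c + 1) := NP_of_pos (by linarith)
  have hab : NP (a + 1 - b) := NP_of_pos (by linarith)
  have g1 := gauss (a := a) (b := b) hc1 (by linarith)
  have g2 := gauss (a := a + 1 - (c + 1)) (b := a) hab (by linarith)
  have sP := gt_e_summable (a := a) (b := b) (NP_of_pos hc) e (by linarith)
  have sQ := gt_e_summable (a := a + 1 - c) (b := a) hab (a - e) (by linarith)
  have eP : (c - e) * ∑' k : ℕ, gt a b (c + 1) k * (e + k)⁻¹ =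
      c * (∑' k : ℕ, gt a b c k * (e + k)⁻¹) - ∑' k : ℕ, gt a b (c + 1) k := by
    rw [← tsum_mul_left, ← tsum_mul_left, ← Summable.tsum_sub (sP.mul_left c) g1.summable]
    congr 1; ext k
    have e1 : poch (c + 1) k = poch c k * (c + k) / c := by
      rw [eq_div_iff hc.ne', ← poch_succ, poch_succ_left]; ring
    have := poch_ne (NP_of_pos hc) k
    have := (NP_of_pos hc) k
    have : (k.factorial : ℝ) ≠ 0 := by positivity
    have := he k
    rw [gt, gt, e1]
    field_simp
    ring
  have eQ : (c - e) * ∑' j : ℕ, gt (a + 1 - (c + 1)) a (a + 1 - b) j * (a - e + j)⁻¹ =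
      (c - a) * (∑' j : ℕ, gt (a + 1 - c) a (a + 1 - b) j * (a - e + j)⁻¹) +
        ∑' j : ℕ, gt (a + 1 - (c + 1)) a (a + 1 - b) j := by
    rw [← tsum_mul_left, ← tsum_mul_left, ← Summable.tsum_add (sQ.mul_left _) g2.summable]
    congr 1; ext k
    have e1 : (a - c) * poch (a + 1 - c) k = poch (a + 1 - (c + 1)) k * (a - c + k) := by
      have := poch_succ_left (a - c) k
      rw [poch_succ] at this
      rw [show a + 1 - c = a - c + 1 by ring, ← this, show a + 1 - (c + 1) = a - c by ring]
    have := poch_ne hab k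
    have : (k.factorial : ℝ) ≠ 0 := by positivity
    have := hae k
    rw [gt, gt]
    field_simp
    linear_combination (poch a k) * e1
  rw [g1.tsum_eq] at eP
  rw [g2.tsum_eq] at eQ
  have hca0 := hca.ne
  rw [show c + 1 - a = c - a + 1 by ring, Real.Gamma_add_one hca0] at h
  rw [show c + 1 - a = c - a + 1 by ring, Real.Gamma_add_one hca0,
    show c - a + 1 - b = c + 1 - a - b by ring, Real.Gamma_add_one hc.ne'] at eP
  rw [Real.Gamma_add_one hc.ne'] at h
  rw [show a + 1 - b - (a + 1 - (c + 1)) - a = c + 1 - a - b by ring,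
    show a + 1 - b - (a + 1 - (c + 1)) = c + 1 - b by ring,
    show a + 1 - b - a = 1 - b by ring] at eQ
  have i1 := inv_Gamma_step (c - e)
  rw [show c - e + 1 = c + 1 - e by ring] at i1
  rw [← i1]
  set P' := ∑' k : ℕ, gt a b (c + 1) k * (e + k)⁻¹
  set P := ∑' k : ℕ, gt a b c k * (e + k)⁻¹
  set Q' := ∑' j : ℕ, gt (a + 1 - (c + 1)) a (a + 1 - b) j * (a - e + j)⁻¹
  set Q := ∑' j : ℕ, gt (a + 1 - c) a (a + 1 - b) j * (a - e + j)⁻¹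
  have n1 := hca.Gamma_ne
  have n2 := (NP_of_pos ha).Gamma_ne
  have n3 := (NP_of_pos hc).Gamma_ne
  have n4 := (NP_of_pos (by linarith : 0 < 1 - b)).Gamma_ne
  have n5 := hab.Gamma_ne
  have n6 := (NP_of_pos (by linarith : 0 < c + 1 - b)).Gamma_ne
  have hc0 := hc.ne'
  apply mul_left_cancel₀ hca0
  have h' := congrArg (fun t => (c - e) * t) h
  rw [mul_add] at h'
  have a1 : (c - e) * ((c - a) * Real.Gamma (c - a) * Real.Gamma a / (c * Real.Gamma c) * P')
    = (c - a) * Real.Gamma (c - a) * Real.Gamma a / (c * Real.Gamma c) * ((c - e) * P') := by ring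
  have a2 : (c - e) * (Real.Gamma a * Real.Gamma (1 - b) / Real.Gamma (a + 1 - b) * Q')
    = Real.Gamma a * Real.Gamma (1 - b) / Real.Gamma (a + 1 - b) * ((c - e) * Q') := by ring
  rw [a1, a2, eP, eQ] at h'
  have h'' : (c - e) * ((c - a) * Real.Gamma (c - a) * Real.Gamma e * Real.Gamma (1 - b) *
      Real.Gamma (a - e) * (Real.Gamma (c + 1 - e))⁻¹ * (Real.Gamma (e + 1 - b))⁻¹) =
      (c - a) * (Real.Gamma (c - a) * Real.Gamma a / Real.Gamma c * P +
    Real.Gamma a * Real.Gamma (1 - b) / Real.Gamma (a + 1 - b) * Q) := by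
    rw [h']
    field_simp
    ring
  rw [← h'']
  ring

lemma threeTerm {a b c e : ℝ} (ha : 0 < a) (hb : b < 1) (hc : 0 < c) (habc : a + b < c + 1)
    (hac : a < c + 2) (hca : NP (c - a)) (he : NP e) (hae : NP (a - e)) :
    Real.Gamma (c - a) * Real.Gamma e * Real.Gamma (1 - b) * Real.Gamma (a - e) *
      (Real.Gamma (c - e))⁻¹ * (Real.Gamma (e + 1 - b))⁻¹ =
    Real.Gamma (c - a) * Real.Gamma a / Real.Gamma c * ∑' k : ℕ, gt a b c k * (e + k)⁻¹ +
    Real.Gamma a * Real.Gamma (1 - b) / Real.Gamma (a + 1 - b) *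
      ∑' j : ℕ, gt (a + 1 - c) a (a + 1 - b) j * (a - e + j)⁻¹ := by
  apply threeTerm_step ha hb hc habc hca he hae
  apply threeTerm_step ha hb (by linarith) (by linarith) _ he hae
  · apply threeTerm_base ha hb (by linarith) he hae
  · have := hca.succ
    rwa [show c - a + 1 = c + 1 - a by ring] at this

lemma thomae {a b c D E S : ℝ} (ha : 0 < a) (hb : 0 < b) (hc : 0 < c) (hD : b < D) (hE : b < E)
    (hs : a + b + c < D + E)
    (h : HasSum (fun i : ℕ => poch a i * poch c i / i.factorial * Real.Gamma (b + i) /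
      (Real.Gamma (D + i) * Real.Gamma (E + i))) S) :
    HasSum (fun j : ℕ => poch (D - b) j * poch (E - b) j / j.factorial *
      Real.Gamma (D + E - a - b - c + j) /
      (Real.Gamma (D + E - a - b + j) * Real.Gamma (D + E - b - c + j))) S := by
  have hDE : 0 < D + E - b := by linarith
  have hN := NP_of_pos hDE
  refine swap_nonneg (f := fun i j => poch a i * poch c i / i.factorial *
    (poch (D - b) j * poch (E - b) j / j.factorial) / Real.Gamma (D + E - b + i + j)) ?_ ?_ ?_ h
  · intro i j
    have := poch_pos ha i
    have := poch_pos hc i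
    have := poch_pos (by linarith : 0 < D - b) j
    have := poch_pos (by linarith : 0 < E - b) j
    have := Real.Gamma_pos_of_pos (by positivity : 0 < D + E - b + i + j)
    positivity
  · intro i
    have hi : (0 : ℝ) ≤ i := by positivity
    have hp : 0 < D + E - b + i := by linarith
    have g := (gauss (a := D - b) (b := E - b) (NP_of_pos hp) (by linarith)).mul_left
      (poch a i * poch c i / i.factorial / Real.Gamma (D + E - b + i))
    refine hasSum_conv g (fun j => ?_) ?_
    · rw [Gamma_add_nat (NP_of_pos hp), gt]
      have := (NP_of_pos hp).Gamma_ne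
      have := poch_ne (NP_of_pos hp) j
      field_simp
    · rw [show D + E - b + i - (D - b) - (E - b) = b + i by ring,
        show D + E - b + i - (D - b) = E + i by ring, show D + E - b + i - (E - b) = D + i by ring]
      have := (NP_of_pos hp).Gamma_ne
      field_simp
  · intro j
    have hi : (0 : ℝ) ≤ j := by positivity
    have hp : 0 < D + E - b + j := by linarith
    have g := (gauss (a := a) (b := c) (NP_of_pos hp) (by linarith)).mul_left
      (poch (D - b) j * poch (E - b) j / j.factorial / Real.Gamma (D + E - b + j))
    refine hasSum_conv g (fun i => ?_) ?_
    · rw [show D + E - b + i + j = D + E - b + j + i by ring, Gamma_add_nat (NP_of_pos hp), gt]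
      have := (NP_of_pos hp).Gamma_ne
      have := poch_ne (NP_of_pos hp) i
      field_simp
    · rw [show D + E - b + j - a - c = D + E - a - b - c + j by ring,
        show D + E - b + j - a = D + E - a - b + j by ring,
        show D + E - b + j - c = D + E - b - c + j by ring]
      have := (NP_of_pos hp).Gamma_ne
      field_simp

/-- inner coefficients -/
noncomputable def cc (d x : ℝ) : ℝ := ∑' k : ℕ, gt 1 d (2 - d) k * (2 - d + x + k)⁻¹

lemma cc_summable {d : ℝ} (x : ℝ) (h1 : d < 4 / 5) :
    Summable (fun k : ℕ => gt 1 d (2 - d) k * (2 - d + x + k)⁻¹) :=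
  gt_e_summable (NP_of_pos (by linarith)) _ (by linarith)

lemma gt_one (d c : ℝ) (k : ℕ) : gt 1 d c k = poch d k / poch c k := by
  have : (k.factorial : ℝ) ≠ 0 := by positivity
  rw [gt, poch_one]
  field_simp

lemma cc_rec {d x : ℝ} (h1 : d < 4 / 5) (hx : 0 ≤ x) :
    (x + 2 - 2 * d) * cc d x = x * cc d (x - 1) + (1 - d) / (x + 1 - d) := by
  have s1 := cc_summable x h1
  have s2 := cc_summable (x - 1) h1
  have hs := (s1.mul_left (x + 2 - 2 * d)).sub (s2.mul_left x)
  have hN : NP (2 - d) := NP_of_pos (by linarith)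
  have ht := hasSum_telescope (G := fun k : ℕ => (1 - d) / (x + 1 - d) -
    gt 1 d (2 - d) k * (1 - x * (1 - d + x + k)⁻¹)) hs (l := (1 - d) / (x + 1 - d)) ?_ ?_ ?_
  · have := ht.unique ((s1.hasSum.mul_left (x + 2 - 2 * d)).sub (s2.hasSum.mul_left x))
    rw [cc, cc]
    linarith
  · intro k
    have hk : (0 : ℝ) ≤ k := by positivity
    have e1 : 2 - d + (k : ℝ) ≠ 0 := hN k
    have e2 := poch_ne hN k
    have e3 : 2 - d + x + (k : ℝ) ≠ 0 := by linarith
    have e4 : 1 - d + x + (k : ℝ) ≠ 0 := by linarith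
    have e5 : 1 - d + x + (k + 1 : ℝ) = 2 - d + x + k := by ring
    have e6 : 2 - d + (x - 1) + (k : ℝ) = 1 - d + x + k := by ring
    rw [gt_one, gt_one, poch_succ, poch_succ]
    push_cast
    rw [e5, e6]
    field_simp
    ring
  · have e4 : 1 - d + x ≠ 0 := by linarith
    have e5 : x + 1 - d ≠ 0 := by linarith
    rw [gt_one, poch_zero, poch_zero]
    simp only [Nat.cast_zero, add_zero]
    field_simp
    ring
  · have t1 := tendsto_zero_of_bigO (by linarith) (gt_bigO 1 d hN)
    have t2 := tendsto_zero_of_bigO (by norm_num) (inv_bigO (1 - d + x))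
    have := (t1.mul ((t2.const_mul x).const_sub 1)).const_sub ((1 - d) / (x + 1 - d))
    simpa using this

lemma cc_sum {d : ℝ} (h1 : d < 4 / 5) (n : ℕ) :
    poch (3 - 2 * d) n / n.factorial * cc d n =
      1 / 2 * ∑ i ∈ Finset.range (n + 1), poch (2 - 2 * d) i / i.factorial * (1 - d + i)⁻¹ := by
  induction n with
  | zero =>
    have := cc_rec h1 le_rfl
    have e : (2 - 2 * d) ≠ 0 := by linarith
    have e' : (1 - d) ≠ 0 := by linarith
    simp [poch_zero] at this ⊢
    field_simp at this ⊢
    linarith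
  | succ n ih =>
    rw [Finset.sum_range_succ, mul_add, ← ih]
    have := cc_rec (x := (n + 1 : ℝ)) h1 (by positivity)
    rw [add_sub_cancel_right] at this
    have hn : (0 : ℝ) ≤ n := by positivity
    have e1 : (n + 1 : ℝ) + 2 - 2 * d ≠ 0 := by linarith
    have e2 : (n + 1 : ℝ) + 1 - d ≠ 0 := by linarith
    have e3 : 1 - d + (n + 1 : ℝ) ≠ 0 := by linarith
    have e4 : (n.factorial : ℝ) ≠ 0 := by positivity
    have e5 : (n + 1 : ℝ) ≠ 0 := by positivity
    rw [poch_succ, poch_succ_left, Nat.factorial_succ, show 2 - 2 * d + 1 = 3 - 2 * d by ring]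
    push_cast
    rw [show poch (3 - 2 * d) n * (3 - 2 * d + n) / ((n + 1) * n.factorial) * cc d (n + 1) =
      poch (3 - 2 * d) n / ((n + 1) * n.factorial) * ((n + 1 + 2 - 2 * d) * cc d (n + 1)) by ring,
      this]
    field_simp
    ring

lemma tail_sum {d : ℝ} (h0 : 0 < d) (h1 : d < 4 / 5) (i : ℕ) :
    HasSum (fun n : ℕ => if i ≤ n then poch d n / poch (5 - 4 * d) n else 0)
      ((4 - 4 * d) / (4 - 5 * d) * (poch d i / poch (4 - 4 * d) i)) := by
  have hN : NP (4 - 4 * d) := NP_of_pos (by linarith)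
  have hN5 : NP (5 - 4 * d) := NP_of_pos (by linarith)
  set T : ℕ → ℝ := fun i => (4 - 4 * d) / (4 - 5 * d) * (poch d i / poch (4 - 4 * d) i) with hT
  have sq : Summable (fun n : ℕ => poch d n / poch (5 - 4 * d) n) :=
    (gt_summable (a := 1) (b := d) hN5 (by linarith)).congr fun k => (gt_one _ _ _)
  refine hasSum_telescope (G := fun n => T i - T (max i n)) ?_ ?_ (by simp) ?_
  · refine Summable.of_norm_bounded sq.norm fun n => ?_
    split_ifs
    · exact le_rfl
    · rw [norm_zero]; exact norm_nonneg _
  · intro k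
    split_ifs with h
    · rw [max_eq_right h, max_eq_right (by omega)]
      simp only [hT]
      have e1 := poch_ne hN k
      have e2 := poch_ne hN5 k
      have e3 := hN k
      have e4 : 4 - 5 * d ≠ 0 := by linarith
      have e5 := hN.ne
      have e6 : poch (5 - 4 * d) k = poch (4 - 4 * d) k * (4 - 4 * d + k) / (4 - 4 * d) := by
        rw [← poch_succ, poch_succ_left, show 4 - 4 * d + 1 = 5 - 4 * d by ring,
          mul_div_cancel_left₀ _ e5]
      rw [e6, poch_succ, poch_succ]
      generalize hX : 4 - 4 * d = X at *
      rw [show 4 - 5 * d = X - d by linarith] at *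
      field_simp
      ring
    · rw [max_eq_left (by omega), max_eq_left (by omega), sub_self]
  · have t1 : Tendsto T atTop (𝓝 0) := by
      have := (tendsto_zero_of_bigO (by linarith) (gt_bigO 1 d hN)).const_mul
        ((4 - 4 * d) / (4 - 5 * d))
      rw [mul_zero] at this
      exact this.congr fun k => by rw [gt_one]
    have t2 : Tendsto (fun n => T (max i n)) atTop (𝓝 0) := by
      refine t1.congr' ?_
      filter_upwards [eventually_ge_atTop i] with n hn
      rw [max_eq_right hn]
    simpa using t2.const_sub (T i)

/-- the single series -/
noncomputable def UU (d : ℝ) : ℝ := ∑' i : ℕ, gt (2 - 2 * d) d (4 - 4 * d) i * (1 - d + i)⁻¹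

lemma series_I {d : ℝ} (h0 : 0 < d) (h1 : d < 4 / 5) :
    HasSum (fun n : ℕ => poch d n / n.factorial *
      (Real.Gamma (3 - 2 * d + n) * Real.Gamma (2 - 2 * d) / Real.Gamma (5 - 4 * d + n)) * cc d n)
      ((1 - d) * Real.Gamma (2 - 2 * d) ^ 2 / (Real.Gamma (4 - 4 * d) * (4 - 5 * d)) * UU d) := by
  have hN : NP (4 - 4 * d) := NP_of_pos (by linarith)
  have hN5 : NP (5 - 4 * d) := NP_of_pos (by linarith)
  have hN3 : NP (3 - 2 * d) := NP_of_pos (by linarith)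
  have hN2 : NP (2 - 2 * d) := NP_of_pos (by linarith)
  have key : HasSum (fun n : ℕ => poch d n / poch (5 - 4 * d) n *
      ∑ i ∈ Finset.range (n + 1), poch (2 - 2 * d) i / i.factorial * (1 - d + i)⁻¹)
      ((4 - 4 * d) / (4 - 5 * d) * UU d) := by
    refine swap_nonneg (f := fun i n => (poch (2 - 2 * d) i / i.factorial * (1 - d + i)⁻¹) *
      (if i ≤ n then poch d n / poch (5 - 4 * d) n else 0)) ?_ (fun i =>
        (tail_sum h0 h1 i).mul_left _) ?_ ?_
    · intro i n
      have := poch_pos (by linarith : 0 < 2 - 2 * d) i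
      have := poch_pos h0 n
      have := poch_pos (by linarith : 0 < 5 - 4 * d) n
      have : 0 < 1 - d := by linarith
      split_ifs
      · positivity
      · simp
    · intro n
      rw [Finset.mul_sum]
      have := hasSum_sum_of_ne_finset_zero (L := SummationFilter.unconditional ℕ) (s := Finset.range (n + 1)) (f := fun i : ℕ =>
        (poch (2 - 2 * d) i / i.factorial * (1 - d + i)⁻¹) *
      (if i ≤ n then poch d n / poch (5 - 4 * d) n else 0)) ?_
      · refine hasSum_conv this (fun _ => rfl) ?_
        refine Finset.sum_congr rfl fun i hi => ?_
        rw [if_pos (by simpa [Nat.lt_succ_iff] using hi)]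
        ring
      · intro i hi
        rw [if_neg (by simpa using hi), mul_zero]
    · refine hasSum_conv ((gt_e_summable (a := 2 - 2 * d) (b := d) hN (1 - d)
        (by linarith)).hasSum.mul_left ((4 - 4 * d) / (4 - 5 * d))) (fun i => ?_) rfl
      rw [gt]
      have := poch_ne hN i
      have : (i.factorial : ℝ) ≠ 0 := by positivity
      field_simp
  refine hasSum_conv (key.mul_left (1 / 2 * (Real.Gamma (3 - 2 * d) * Real.Gamma (2 - 2 * d) /
    Real.Gamma (5 - 4 * d)))) (fun n => ?_) ?_
  · have := cc_sum h1 n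
    rw [Gamma_add_nat hN3, Gamma_add_nat hN5]
    have e1 := poch_ne hN5 n
    have e2 := hN5.Gamma_ne
    have : (n.factorial : ℝ) ≠ 0 := by positivity
    calc _ = poch d n / poch (5 - 4 * d) n * (Real.Gamma (3 - 2 * d) * Real.Gamma (2 - 2 * d) /
          Real.Gamma (5 - 4 * d)) * (poch (3 - 2 * d) n / n.factorial * cc d n) := by
          field_simp
      _ = _ := by rw [cc_sum h1 n]; ring
  · have a1 : Real.Gamma (5 - 4 * d) = (4 - 4 * d) * Real.Gamma (4 - 4 * d) := by
      rw [← Real.Gamma_add_one hN.ne]; congr 1; ring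
    have a2 : Real.Gamma (3 - 2 * d) = (2 - 2 * d) * Real.Gamma (2 - 2 * d) := by
      rw [← Real.Gamma_add_one hN2.ne]; congr 1; ring
    rw [a1, a2]
    have := hN.ne
    have := hN.Gamma_ne
    have : 4 - 5 * d ≠ 0 := by linarith
    field_simp

lemma binom_hasSum (d : ℝ) {x : ℝ} (hx : |x| < 1) :
    HasSum (fun n : ℕ => poch d n / n.factorial * x ^ n) ((1 - x) ^ (-d)) := by
  have h := (Real.one_div_one_sub_rpow_hasFPowerSeriesOnBall_zero d).hasSum (y := x)
    (by simpa [← ofReal_norm] using hx)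
  refine hasSum_conv h (fun n => ?_) ?_
  · rw [FormalMultilinearSeries.ofScalars_apply_eq, smul_eq_mul]
    congr 1
    have := Ring.factorial_nsmul_multichoose_eq_ascPochhammer d n
    rw [Polynomial.ascPochhammer_smeval_eq_eval, nsmul_eq_mul] at this
    rw [Ring.choose, show d + n - 1 - n + 1 = d by ring, poch, ← this]
    have : (n.factorial : ℝ) ≠ 0 := by positivity
    field_simp
  · have : 0 ≤ 1 - x := by linarith [(abs_lt.1 hx).2]
    rw [Real.rpow_neg this, zero_add, one_div]

lemma beta_int {p q : ℝ} (hp : 0 < p) (hq : 0 < q) :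
    IntegrableOn (fun x : ℝ => x ^ (p - 1) * (1 - x) ^ (q - 1)) (Set.Ioo 0 1) ∧
    ∫ x in Set.Ioo (0 : ℝ) 1, x ^ (p - 1) * (1 - x) ^ (q - 1) =
      Real.Gamma p * Real.Gamma q / Real.Gamma (p + q) := by
  have hc := Complex.betaIntegral_convergent (u := p) (v := q) (by simpa) (by simpa)
  rw [intervalIntegrable_iff_integrableOn_Ioo_of_le zero_le_one] at hc
  have he : Set.EqOn (fun x : ℝ => (x : ℂ) ^ ((p : ℂ) - 1) * (1 - (x : ℂ)) ^ ((q : ℂ) - 1))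
      (fun x : ℝ => ((x ^ (p - 1) * (1 - x) ^ (q - 1) : ℝ) : ℂ)) (Set.Ioo 0 1) := by
    intro x hx
    have h1 : 0 ≤ 1 - x := by linarith [hx.2]
    simp only
    push_cast
    rw [Complex.ofReal_cpow hx.1.le, Complex.ofReal_cpow h1]
    push_cast
    rfl
  have hb := Complex.betaIntegral_eq_Gamma_mul_div (p : ℂ) q (by simpa) (by simpa)
  rw [Complex.betaIntegral, intervalIntegral.integral_of_le zero_le_one,
    integral_Ioc_eq_integral_Ioo, setIntegral_congr_fun measurableSet_Ioo he,
    integral_complex_ofReal, Complex.Gamma_ofReal, Complex.Gamma_ofReal, ← Complex.ofReal_add,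
    Complex.Gamma_ofReal] at hb
  constructor
  · have := (hc.congr_fun he measurableSet_Ioo).re
    rw [IntegrableOn]
    simpa using this
  · exact_mod_cast hb

lemma pow_int {s : ℝ} (hs : 0 < s) :
    IntegrableOn (fun x : ℝ => x ^ (s - 1)) (Set.Ioo 0 1) ∧
    ∫ x in Set.Ioo (0 : ℝ) 1, x ^ (s - 1) = s⁻¹ := by
  have := beta_int hs one_pos
  simp only [sub_self, Real.rpow_zero, mul_one, Real.Gamma_one, Real.Gamma_add_one hs.ne'] at this
  refine ⟨this.1, this.2.trans ?_⟩
  have := (Real.Gamma_pos_of_pos hs).ne'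
  field_simp

lemma hyp_hasSum {d v : ℝ} (h0 : 0 < d) (h1 : d < 4 / 5) (hv0 : 0 < v) (hv1 : v < 1) :
    HasSum (fun k : ℕ => gt 1 d (2 - d) k * v ^ k) (hyp2F1 1 d (2 - d) v) := by
  have hN : NP (2 - d) := NP_of_pos (by linarith)
  have s : Summable (fun k : ℕ => gt 1 d (2 - d) k * v ^ k) := by
    refine Summable.of_norm_bounded (summable_geometric_of_lt_one hv0.le hv1) fun k => ?_
    have p1 := poch_pos h0 k
    have p2 := poch_pos (by linarith : 0 < 2 - d) k
    rw [gt_one, Real.norm_of_nonneg (by positivity)]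
    have : poch d k / poch (2 - d) k ≤ 1 := by
      rw [div_le_one p2]; exact poch_mono h0 (by linarith) k
    exact mul_le_of_le_one_left (by positivity) this
  refine hasSum_conv s.hasSum (fun _ => rfl) ?_
  rw [hyp2F1]
  refine tsum_congr fun k => ?_
  rw [gt]
  have := poch_ne hN k
  have : (k.factorial : ℝ) ≠ 0 := by positivity
  field_simp

lemma inner_int {d u : ℝ} (h0 : 0 < d) (h1 : d < 4 / 5) (hu0 : 0 < u) (hu1 : u < 1) :
    HasSum (fun n : ℕ => poch d n / n.factorial * u ^ n * cc d n)
      (∫ v in Set.Ioo (0 : ℝ) 1, v ^ (1 - d) * (1 - u * v) ^ (-d) * hyp2F1 1 d (2 - d) v) := by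
  set F : ℕ × ℕ → ℝ → ℝ := fun p v => poch d p.1 / p.1.factorial * u ^ p.1 * gt 1 d (2 - d) p.2 *
    v ^ ((2 - d + p.1 + p.2) - 1) with hF
  have hpos : ∀ p : ℕ × ℕ, 0 < 2 - d + p.1 + p.2 := fun p => by
    have : 0 < 2 - d := by linarith
    positivity
  have hi : ∀ p, Integrable (F p) (volume.restrict (Set.Ioo 0 1)) := fun p =>
    (pow_int (hpos p)).1.const_mul _
  have hg : ∀ k, 0 < gt 1 d (2 - d) k := fun k => by
    rw [gt_one]; exact div_pos (poch_pos h0 k) (poch_pos (by linarith) k)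
  have hv : ∀ p, ∫ v in Set.Ioo (0 : ℝ) 1, F p v = poch d p.1 / p.1.factorial * u ^ p.1 *
      (gt 1 d (2 - d) p.2 * (2 - d + p.1 + p.2)⁻¹) := fun p => by
    simp only [hF]
    rw [integral_const_mul, (pow_int (hpos p)).2]; ring
  have hcoef : ∀ p : ℕ × ℕ, 0 ≤ poch d p.1 / p.1.factorial * u ^ p.1 * gt 1 d (2 - d) p.2 :=
    fun p => by
      have := poch_pos h0 p.1
      have := hg p.2
      positivity
  have hn : ∀ p, ∫ v in Set.Ioo (0 : ℝ) 1, ‖F p v‖ = ∫ v in Set.Ioo (0 : ℝ) 1, F p v := fun p => by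
    refine setIntegral_congr_fun measurableSet_Ioo fun v hv => ?_
    exact Real.norm_of_nonneg (mul_nonneg (hcoef p) (Real.rpow_nonneg hv.1.le _))
  have hs : Summable fun p : ℕ × ℕ => poch d p.1 / p.1.factorial * u ^ p.1 *
      (gt 1 d (2 - d) p.2 * (2 - d + p.1 + p.2)⁻¹) := by
    have s1 := (binom_hasSum d (x := u) (by rw [abs_of_pos hu0]; exact hu1)).summable
    have s2 := cc_summable 0 h1
    refine Summable.of_norm_bounded (summable_mul_of_summable_norm s1.norm s2.norm) fun p => ?_
    have := poch_pos h0 p.1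
    have := hg p.2
    have := hpos p
    have : 0 < 2 - d := by linarith
    rw [Real.norm_of_nonneg (by positivity), add_zero]
    gcongr
    simp
  have key := hasSum_integral_of_summable_integral_norm hi (by
    simp only [hn, hv]; exact hs)
  simp only [hv] at key
  have e : ∫ v in Set.Ioo (0 : ℝ) 1, ∑' p, F p v = ∫ v in Set.Ioo (0 : ℝ) 1,
      v ^ (1 - d) * (1 - u * v) ^ (-d) * hyp2F1 1 d (2 - d) v := by
    refine setIntegral_congr_fun measurableSet_Ioo fun v hv => ?_
    have hv0 := hv.1
    have hv1 := hv.2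
    have b := binom_hasSum d (x := u * v) (by
      rw [abs_of_pos (by positivity)]; nlinarith)
    have g := hyp_hasSum h0 h1 hv0 hv1
    have m := (b.mul g (summable_mul_of_summable_norm b.summable.norm g.summable.norm)).mul_left
      (v ^ (1 - d))
    refine (hasSum_conv m (fun p => ?_) (mul_assoc _ _ _)).tsum_eq
    simp only [hF]
    rw [show 2 - d + (p.1 : ℝ) + p.2 - 1 = 1 - d + p.1 + p.2 by ring, Real.rpow_add_natCast hv0.ne',
      Real.rpow_add_natCast hv0.ne', mul_pow]
    ring
  rw [e] at key
  refine key.prod_fiberwise fun n => ?_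
  exact (cc_summable n h1).hasSum.mul_left _

lemma double_int {d : ℝ} (h0 : 0 < d) (h1 : d < 4 / 5) :
    (∫ u in (0:ℝ)..1, ∫ v in (0:ℝ)..1,
      u ^ (2 - 2 * d) * (1 - u) ^ (1 - 2 * d) * v ^ (1 - d) * (1 - u * v) ^ (-d) *
        hyp2F1 1 d (2 - d) v) =
      (1 - d) * Real.Gamma (2 - 2 * d) ^ 2 / (Real.Gamma (4 - 4 * d) * (4 - 5 * d)) * UU d := by
  have hser := series_I h0 h1
  set F : ℕ → ℝ → ℝ := fun n u => poch d n / n.factorial * cc d n *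
    (u ^ ((3 - 2 * d + n) - 1) * (1 - u) ^ ((2 - 2 * d) - 1)) with hF
  have hb := fun n : ℕ => beta_int (p := 3 - 2 * d + n) (q := 2 - 2 * d)
    (by have : 0 < 3 - 2 * d := by linarith
        positivity) (by linarith)
  have hi : ∀ n, Integrable (F n) (volume.restrict (Set.Ioo 0 1)) := fun n =>
    (hb n).1.const_mul _
  have hv : ∀ n : ℕ, ∫ u in Set.Ioo (0 : ℝ) 1, F n u = poch d n / n.factorial *
      (Real.Gamma (3 - 2 * d + n) * Real.Gamma (2 - 2 * d) / Real.Gamma (5 - 4 * d + n)) *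
        cc d n := fun n => by
    simp only [hF]
    rw [integral_const_mul, (hb n).2, show 3 - 2 * d + n + (2 - 2 * d) = 5 - 4 * d + n by ring]
    ring
  have hcc : ∀ n : ℕ, 0 ≤ cc d n := fun n => tsum_nonneg fun k => by
    have := poch_pos h0 k
    have := poch_pos (by linarith : 0 < 2 - d) k
    have : 0 < 2 - d := by linarith
    rw [gt_one]
    positivity
  have hn : ∀ n, ∫ u in Set.Ioo (0 : ℝ) 1, ‖F n u‖ = ∫ u in Set.Ioo (0 : ℝ) 1, F n u := fun n => by
    refine setIntegral_congr_fun measurableSet_Ioo fun u hu => ?_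
    have := poch_pos h0 n
    have := hcc n
    have a1 := hu.1
    have a2 : 0 < 1 - u := by linarith [hu.2]
    refine Real.norm_of_nonneg ?_
    positivity
  have key := hasSum_integral_of_summable_integral_norm hi (by
    simp only [hn, hv]; exact hser.summable)
  simp only [hv] at key
  rw [hser.unique key, intervalIntegral.integral_of_le zero_le_one, integral_Ioc_eq_integral_Ioo]
  refine setIntegral_congr_fun measurableSet_Ioo fun u hu => ?_
  beta_reduce
  rw [intervalIntegral.integral_of_le zero_le_one, integral_Ioc_eq_integral_Ioo]
  have m := (inner_int h0 h1 hu.1 hu.2).mul_left (u ^ (2 - 2 * d) * (1 - u) ^ (1 - 2 * d))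
  rw [← integral_const_mul] at m
  have m2 : HasSum (fun n => F n u) (∫ v in Set.Ioo (0 : ℝ) 1,
      u ^ (2 - 2 * d) * (1 - u) ^ (1 - 2 * d) * v ^ (1 - d) * (1 - u * v) ^ (-d) *
        hyp2F1 1 d (2 - d) v) := by
    refine hasSum_conv m (fun n => ?_) ?_
    · simp only [hF]
      rw [show 3 - 2 * d + (n : ℝ) - 1 = 2 - 2 * d + n by ring, Real.rpow_add_natCast hu.1.ne',
        show 2 - 2 * d - 1 = 1 - 2 * d by ring]
      ring
    · refine setIntegral_congr_fun measurableSet_Ioo fun v hv => ?_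
      beta_reduce
      ring
  exact m2.tsum_eq.symm


/-- the companion series -/
noncomputable def VV (d : ℝ) : ℝ :=
  ∑' j : ℕ, gt (3 - 3 * d) (2 - 2 * d) (4 - 4 * d) j * (4 - 5 * d + j)⁻¹

lemma U_to_V {d : ℝ} (h0 : 0 < d) (h1 : d < 4 / 5) :
    Real.Gamma d / Real.Gamma (1 - d) * UU d =
      Real.Gamma (3 - 3 * d) / Real.Gamma (4 - 5 * d) * VV d := by
  have hN4 : NP (4 - 4 * d) := NP_of_pos (by linarith)
  have hNd : NP d := NP_of_pos h0
  have hN1 : NP (1 - d) := NP_of_pos (by linarith)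
  have hN3 : NP (3 - 3 * d) := NP_of_pos (by linarith)
  have hN45 : NP (4 - 5 * d) := NP_of_pos (by linarith)
  have sU := (gt_e_summable (a := 2 - 2 * d) (b := d) hN4 (1 - d) (by linarith)).hasSum.mul_left
    (Real.Gamma d / (Real.Gamma (1 - d) * Real.Gamma (4 - 4 * d)))
  have sV := (gt_e_summable (a := 3 - 3 * d) (b := 2 - 2 * d) hN4 (4 - 5 * d)
    (by linarith)).hasSum.mul_left
    (Real.Gamma (3 - 3 * d) / (Real.Gamma (4 - 5 * d) * Real.Gamma (4 - 4 * d)))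
  have hstep : ∀ {c : ℝ}, NP c → ∀ k : ℕ, Real.Gamma (c + 1 + k) =
      poch c k * (c + k) * Real.Gamma c := fun {c} hc k => by
    rw [← poch_succ, ← Gamma_add_nat hc]; congr 1; push_cast; ring
  have T := thomae (a := 2 - 2 * d) (b := d) (c := 1 - d) (D := 2 - d) (E := 4 - 4 * d)
    (by linarith) h0 (by linarith) (by linarith) (by linarith) (by linarith)
    (hasSum_conv sU (fun i => ?_) rfl)
  · have T2 := T.unique (hasSum_conv sV (fun j => ?_) rfl)
    · rw [UU, VV]
      have := hN4.Gamma_ne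
      have := hN1.Gamma_ne
      have := hN45.Gamma_ne
      clear sU sV T
      generalize (∑' b : ℕ, gt (2 - 2 * d) d (4 - 4 * d) b * (1 - d + b)⁻¹) = x1 at *
      generalize (∑' b : ℕ, gt (3 - 3 * d) (2 - 2 * d) (4 - 4 * d) b * (4 - 5 * d + b)⁻¹) = x2 at *
      generalize Real.Gamma (4 - 4 * d) = y1 at *
      generalize Real.Gamma (4 - 5 * d) = y2 at *
      generalize Real.Gamma (1 - d) = y3 at *
      generalize Real.Gamma (3 - 3 * d) = y4 at *
      field_simp at T2 ⊢
      linarith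
    · rw [show 2 - d + (4 - 4 * d) - (2 - 2 * d) - d - (1 - d) + j = 3 - 3 * d + j by ring,
        show 2 - d + (4 - 4 * d) - (2 - 2 * d) - d + j = 4 - 4 * d + j by ring,
        show 2 - d + (4 - 4 * d) - d - (1 - d) + j = 4 - 5 * d + 1 + j by ring,
        show 2 - d - d = 2 - 2 * d by ring, show 4 - 4 * d - d = 4 - 5 * d by ring,
        hstep hN45, Gamma_add_nat hN3, Gamma_add_nat hN4, gt]
      have := hN4.Gamma_ne
      have := hN45.Gamma_ne
      have := poch_ne hN4 j
      have := poch_ne hN45 j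
      have := hN45 j
      have : (j.factorial : ℝ) ≠ 0 := by positivity
      clear T sU sV
      generalize poch (4 - 5 * d) j = y1 at *
      generalize poch (4 - 4 * d) j = y2 at *
      generalize Real.Gamma (4 - 4 * d) = y3 at *
      generalize Real.Gamma (4 - 5 * d) = y4 at *
      generalize 4 - 5 * d + (j : ℝ) = y5 at *
      field_simp
  · rw [show 2 - d + (i : ℝ) = 1 - d + 1 + i by ring, hstep hN1, Gamma_add_nat hNd,
      Gamma_add_nat hN4, gt]
    have := hN4.Gamma_ne
    have := hN1.Gamma_ne
    have := poch_ne hN4 i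
    have := poch_ne hN1 i
    have := hN1 i
    have : (i.factorial : ℝ) ≠ 0 := by positivity
    field_simp

lemma hyp3_eq {d : ℝ} (h0 : 0 < d) (hN : NP (3 * d - 2)) :
    hyp3F2 (2 - 2 * d) (2 * d - 1) (3 * d - 2) d (3 * d - 1) 1 =
      (3 * d - 2) * ∑' k : ℕ, gt (2 - 2 * d) (2 * d - 1) d k * (3 * d - 2 + k)⁻¹ := by
  rw [hyp3F2, ← tsum_mul_left]
  refine tsum_congr fun k => ?_
  have e : poch (3 * d - 1) k = poch (3 * d - 2) k * (3 * d - 2 + k) / (3 * d - 2) := by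
    rw [← poch_succ, poch_succ_left, show 3 * d - 2 + 1 = 3 * d - 1 by ring,
      mul_div_cancel_left₀ _ hN.ne]
  rw [e, gt, one_pow]
  have := hN.ne
  have := hN k
  have := poch_ne hN k
  have := poch_ne (NP_of_pos h0) k
  have : (k.factorial : ℝ) ≠ 0 := by positivity
  clear e
  generalize poch (3 * d - 2) k = y1 at *
  generalize 3 * d - 2 + (k : ℝ) = y2 at *
  generalize 3 * d - 2 = y3 at *
  field_simp

theorem double_integral_I2a_form1 (d : ℝ) (hd0 : 0 < d) (hd1 : d < 4 / 5)
    (hd3 : d ≠ 1 / 3) (hd4 : d ≠ 2 / 3) :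
    (∫ u in (0:ℝ)..1, ∫ v in (0:ℝ)..1,
      u ^ (2 - 2 * d) * (1 - u) ^ (1 - 2 * d) * v ^ (1 - d) * (1 - u * v) ^ (-d) *
        hyp2F1 1 d (2 - d) v)
    = Real.Gamma (2 - 2 * d) * Real.Gamma (2 - 3 * d) * Real.Gamma (2 - d) *
        Real.Gamma (3 * d - 2) / (Real.Gamma (5 - 5 * d) * Real.Gamma d ^ 2) *
        hyp3F2 (2 - 2 * d) (2 * d - 1) (3 * d - 2) d (3 * d - 1) 1
      + Real.Gamma (4 - 5 * d) * Real.Gamma (3 - 3 * d) * Real.Gamma (2 - d) *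
          Real.Gamma (3 * d - 2) ^ 2 / (Real.Gamma (5 - 5 * d) * Real.Gamma d ^ 2) := by
  have hNe : NP (3 * d - 2) := by
    intro m hm
    rcases m with _ | _ | m
    · apply hd4; norm_num at hm; linarith
    · apply hd3; norm_num at hm; linarith
    · push_cast at hm
      have : (0 : ℝ) ≤ m := by positivity
      linarith
  have hN4 : NP (4 - 4 * d) := NP_of_pos (by linarith)
  have hNd : NP d := NP_of_pos hd0
  have hN1 : NP (1 - d) := NP_of_pos (by linarith)
  have hN2 : NP (2 - 2 * d) := NP_of_pos (by linarith)
  have hN45 : NP (4 - 5 * d) := NP_of_pos (by linarith)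
  have tt := threeTerm (a := 2 - 2 * d) (b := 2 * d - 1) (c := d) (e := 3 * d - 2) (by linarith)
    (by linarith) hd0 (by linarith) (by linarith)
    (by rwa [show d - (2 - 2 * d) = 3 * d - 2 by ring]) hNe
    (by rwa [show 2 - 2 * d - (3 * d - 2) = 4 - 5 * d by ring])
  rw [show d - (2 - 2 * d) = 3 * d - 2 by ring, show 2 - 2 * d - (3 * d - 2) = 4 - 5 * d by ring,
    show d - (3 * d - 2) = 2 - 2 * d by ring, show 3 * d - 2 + 1 - (2 * d - 1) = d by ring,
    show 1 - (2 * d - 1) = 2 - 2 * d by ring, show 2 - 2 * d + 1 - (2 * d - 1) = 4 - 4 * d by ring,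
    show 2 - 2 * d + 1 - d = 3 - 3 * d by ring] at tt
  rw [double_int hd0 hd1, hyp3_eq hd0 hNe]
  have uv := U_to_V hd0 hd1
  rw [VV] at uv
  set P := ∑' k : ℕ, gt (2 - 2 * d) (2 * d - 1) d k * (3 * d - 2 + k)⁻¹
  set V := ∑' j : ℕ, gt (3 - 3 * d) (2 - 2 * d) (4 - 4 * d) j * (4 - 5 * d + j)⁻¹
  have g1 : Real.Gamma (3 - 3 * d) = (2 - 3 * d) * Real.Gamma (2 - 3 * d) := by
    rw [← Real.Gamma_add_one (by intro h; apply hNe.ne; linarith)]; congr 1; ring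
  have g2 : Real.Gamma (2 - d) = (1 - d) * Real.Gamma (1 - d) := by
    rw [← Real.Gamma_add_one hN1.ne]; congr 1; ring
  have g3 : Real.Gamma (5 - 5 * d) = (4 - 5 * d) * Real.Gamma (4 - 5 * d) := by
    rw [← Real.Gamma_add_one hN45.ne]; congr 1; ring
  have n1 := hN4.Gamma_ne
  have n2 := hNd.Gamma_ne
  have n3 := hN1.Gamma_ne
  have n4 := hN45.Gamma_ne
  have n5 := hN45.ne
  have n6 := hN2.Gamma_ne
  have eU : UU d = Real.Gamma (3 - 3 * d) / Real.Gamma (4 - 5 * d) * V *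
      (Real.Gamma (1 - d) / Real.Gamma d) := by
    rw [← uv]; field_simp
  have eV : Real.Gamma (2 - 2 * d) * Real.Gamma (2 - 2 * d) / Real.Gamma (4 - 4 * d) * V =
      Real.Gamma (3 * d - 2) ^ 2 * Real.Gamma (4 - 5 * d) / Real.Gamma d -
      Real.Gamma (3 * d - 2) * Real.Gamma (2 - 2 * d) / Real.Gamma d * P := by
    rw [eq_sub_iff_add_eq', ← tt]
    generalize Real.Gamma (2 - 2 * d) = y1 at *
    field_simp
  calc _ = (1 - d) / (4 - 5 * d) * (Real.Gamma (3 - 3 * d) / Real.Gamma (4 - 5 * d)) *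
        (Real.Gamma (1 - d) / Real.Gamma d) *
        (Real.Gamma (2 - 2 * d) * Real.Gamma (2 - 2 * d) / Real.Gamma (4 - 4 * d) * V) := by
        rw [eU]; field_simp
    _ = _ := by
        rw [eV, g1, g2, g3]
        field_simp
        ring
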